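/- Let 𝓛 > 0, let ρ : ℝ^d → ℝ be a nonnegative bounded measurable 𝓛-periodic function and v : ℝ^d → ℝ^d a bounded measurable 𝓛-periodic vector field, and let ℓ > 0. Define ṽ_ℓ(x) := \overline{(ρv)}_ℓ(x)/ρ̄_ℓ(x) at points where ρ̄_ℓ(x) > 0 and ṽ_ℓ(x) := 0 otherwise. Then the large-scale kinetic energy is bounded by the total kinetic energy: ∫_{[0,𝓛]^d} (1/2) ρ̄_ℓ(x) |ṽ_ℓ(x)|² dx ≤ ∫_{[0,𝓛]^d} (1/2) ρ(x) |v(x)|² dx. -/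

import Mathlib

/-!
Write `f = ρ |v|²`. Two facts carry the proof.

* Pointwise, `ρ̄ |ṽ|² ≤ f̄`: for every constant vector `u`, the coarse-graining of `ρ |v - u|² ≥ 0` is
  nonnegative, i.e. `0 ≤ f̄ - 2 ⟪u, (ρv)‾⟫ + |u|² ρ̄`; take `u = ṽ`, for which `(ρv)‾ = ρ̄ u`
  (`QT.cg_mul_norm_favre_sq_le`).
* Coarse-graining preserves the integral of a bounded periodic function over a period box
  (`QT.setIntegral_cg`): by Fubini it reduces to translation invariance of that integral, which
  holds because the box and its translates are all fundamental domains of the lattice `𝓛 ℤ^d`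
  (`QT.setIntegral_box_add`).
-/


open MeasureTheory Metric
open scoped RealInnerProductSpace ENNReal

noncomputable section

abbrev Euc (d : ℕ) := EuclideanSpace ℝ (Fin d)

namespace QT

variable {d : ℕ}

/-- `G` is a mollifier: smooth, nonnegative, supported in the open unit ball, integral one. -/
structure IsMollifier {d : ℕ} (G : Euc d → ℝ) : Prop where
  smooth : ContDiff ℝ (⊤ : ℕ∞) G
  nonneg : ∀ r, 0 ≤ G r
  supp : tsupport G ⊆ ball (0 : Euc d) 1
  integral_one : ∫ r, G r = 1

/-- The rescaled mollifier `G_ℓ(r) = ℓ^{-d} G(r/ℓ)`. -/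
def resc (G : Euc d → ℝ) (ℓ : ℝ) (r : Euc d) : ℝ := (ℓ ^ d)⁻¹ * G (ℓ⁻¹ • r)

/-- Coarse-grained field `ā_ℓ(x) = ∫ G_ℓ(r) a(x+r) dr`. -/
def cg {E : Type*} [NormedAddCommGroup E] [NormedSpace ℝ E]
    (G : Euc d → ℝ) (ℓ : ℝ) (a : Euc d → E) (x : Euc d) : E :=
  ∫ r, resc G ℓ r • a (x + r)

/-- Increment `δa(r;x) = a(x+r) - a(x)`. -/
def incr {E : Type*} [NormedAddCommGroup E] (a : Euc d → E) (r x : Euc d) : E :=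
  a (x + r) - a x

/-- `δa(ℓ;x) = sup_{|r|<ℓ} |δa(r;x)|`. -/
def supIncr {E : Type*} [NormedAddCommGroup E] (a : Euc d → E) (ℓ : ℝ) (x : Euc d) : ℝ :=
  ⨆ r ∈ ball (0 : Euc d) ℓ, ‖incr a r x‖

/-- Second-order coarse-graining cumulant `τ̄_ℓ(f,g)`. -/
def tau2 (G : Euc d → ℝ) (ℓ : ℝ) (f g : Euc d → ℝ) (x : Euc d) : ℝ :=
  cg G ℓ (fun y => f y * g y) x - cg G ℓ f x * cg G ℓ g x

/-- `τ̄_ℓ(ρ, v)` for a scalar density and a vector field. -/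
def tauV (G : Euc d → ℝ) (ℓ : ℝ) (ρ : Euc d → ℝ) (v : Euc d → Euc d) (x : Euc d) : Euc d :=
  cg G ℓ (fun y => ρ y • v y) x - cg G ℓ ρ x • cg G ℓ v x

/-- `i`-th standard basis vector. -/
def e (d : ℕ) (i : Fin d) : Euc d := EuclideanSpace.single i (1 : ℝ)

/-- Partial derivative `∂_i f(x)`. -/
def pd (i : Fin d) (f : Euc d → ℝ) (x : Euc d) : ℝ := fderiv ℝ f x (e d i)

/-- Laplacian. -/
def lap (f : Euc d → ℝ) (x : Euc d) : ℝ := ∑ i, pd i (fun y => pd i f y) x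

/-- Gradient matrix `(∇v)_{ij} = ∂_i v_j`. -/
def gradMat (v : Euc d → Euc d) (x : Euc d) : Matrix (Fin d) (Fin d) ℝ :=
  Matrix.of fun i j => pd i (fun y => v y j) x

/-- Frobenius norm of a matrix. -/
def frobNorm (A : Matrix (Fin d) (Fin d) ℝ) : ℝ := Real.sqrt (∑ i, ∑ j, A i j ^ 2)

/-- Frobenius inner product `A : B`. -/
def frobInner (A B : Matrix (Fin d) (Fin d) ℝ) : ℝ := ∑ i, ∑ j, A i j * B i j

/-- Favre-averaged velocity `ṽ_ℓ = \overline{(ρv)}_ℓ/ρ̄_ℓ` where `ρ̄_ℓ > 0`, `0` otherwise. -/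
def favre (G : Euc d → ℝ) (ℓ : ℝ) (ρ : Euc d → ℝ) (v : Euc d → Euc d) (x : Euc d) : Euc d :=
  if 0 < cg G ℓ ρ x then (cg G ℓ ρ x)⁻¹ • cg G ℓ (fun y => ρ y • v y) x else 0

/-- Favre stress `τ̃_ℓ(v,v) = \overline{(ρ v⊗v)}_ℓ/ρ̄_ℓ − ṽ_ℓ ⊗ ṽ_ℓ`. -/
def favreStress (G : Euc d → ℝ) (ℓ : ℝ) (ρ : Euc d → ℝ) (v : Euc d → Euc d) (x : Euc d) :
    Matrix (Fin d) (Fin d) ℝ :=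
  Matrix.of fun i j =>
    (cg G ℓ ρ x)⁻¹ * cg G ℓ (fun y => ρ y * (v y i * v y j)) x
      - favre G ℓ ρ v x i * favre G ℓ ρ v x j

/-- Deformation work `Π_ℓ = −ρ̄_ℓ ∇ṽ_ℓ : τ̃_ℓ(v,v)`. -/
def deformWork (G : Euc d → ℝ) (ℓ : ℝ) (ρ : Euc d → ℝ) (v : Euc d → Euc d) (x : Euc d) : ℝ :=
  -(cg G ℓ ρ x * frobInner (gradMat (favre G ℓ ρ v) x) (favreStress G ℓ ρ v x))

/-- The periodic box `[0,𝓛]^d`. -/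
def box (d : ℕ) (L : ℝ) : Set (Euc d) := {x | ∀ i, x i ∈ Set.Icc (0 : ℝ) L}

/-- Normalized measure on the periodic box, so that `eLpNorm · p (boxMeasure d 𝓛)`
is the normalized `L^p` norm `(𝓛^{-d}∫_{[0,𝓛]^d}|f|^p)^{1/p}` (ess-sup for `p = ∞`). -/
def boxMeasure (d : ℕ) (L : ℝ) : Measure (Euc d) :=
  (ENNReal.ofReal (L ^ d))⁻¹ • (volume.restrict (box d L))

/-- `𝓛`-periodicity in each coordinate. -/
def PeriodicF {E : Type*} (L : ℝ) (f : Euc d → E) : Prop :=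
  ∀ (x : Euc d) (i : Fin d), f (x + EuclideanSpace.single i L) = f x

/-- Quantum stress `Σ = (ħ²/4m²)(Δρ)I − (ħ²/m²)∇√ρ ⊗ ∇√ρ`. -/
def qStress (hb m : ℝ) (ρ : Euc d → ℝ) (x : Euc d) : Matrix (Fin d) (Fin d) ℝ :=
  Matrix.of fun i j =>
    (hb ^ 2 / (4 * m ^ 2)) * lap ρ x * (if i = j then (1 : ℝ) else 0)
      - (hb ^ 2 / m ^ 2) * (gradient (fun y => Real.sqrt (ρ y)) x i
          * gradient (fun y => Real.sqrt (ρ y)) x j)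

/-- Coarse-grained quantum stress `Σ̄_ℓ`. -/
def cgStress (G : Euc d → ℝ) (ℓ hb m : ℝ) (ρ : Euc d → ℝ) (x : Euc d) :
    Matrix (Fin d) (Fin d) ℝ :=
  Matrix.of fun i j => cg G ℓ (fun z => qStress hb m ρ z i j) x

/-- Row-wise divergence of the coarse-grained quantum stress, `(∇·Σ̄_ℓ)_j = ∑_i ∂_i (Σ̄_ℓ)_{ij}`. -/
def divCgStress (G : Euc d → ℝ) (ℓ hb m : ℝ) (ρ : Euc d → ℝ) (x : Euc d) : Euc d :=
  (EuclideanSpace.equiv (Fin d) ℝ).symm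
    (fun j => ∑ i, pd i (fun y => cgStress G ℓ hb m ρ y i j) x)

/-- Quantum baropycnal work `Λ^{(Σ)}_ℓ = −(1/ρ̄_ℓ)(∇·Σ̄_ℓ)·τ̄_ℓ(ρ,v)`. -/
def qBaroWork (G : Euc d → ℝ) (ℓ hb m : ℝ) (ρ : Euc d → ℝ) (v : Euc d → Euc d) (x : Euc d) : ℝ :=
  -((cg G ℓ ρ x)⁻¹ * ⟪divCgStress G ℓ hb m ρ x, tauV G ℓ ρ v x⟫)

end QT

namespace QT

/-! ### Integration of periodic functions over the period box -/

/-- The basis `(𝓛 e_i)` of `ℝ^d`; its integer span is the period lattice. -/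
def latticeBasis (d : ℕ) {L : ℝ} (hL : 0 < L) : Module.Basis (Fin d) ℝ (Euc d) :=
  (EuclideanSpace.basisFun (Fin d) ℝ).toBasis.isUnitSMul
    (w := fun _ => L) (fun _ => (ne_of_gt hL).isUnit)

lemma latticeBasis_apply {L : ℝ} (hL : 0 < L) (i : Fin d) :
    latticeBasis d hL i = EuclideanSpace.single i L := by
  ext j
  simp [latticeBasis, Module.Basis.isUnitSMul_apply]

lemma latticeBasis_repr {L : ℝ} (hL : 0 < L) (x : Euc d) (i : Fin d) :
    (latticeBasis d hL).repr x i = L⁻¹ * x i := by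
  simp [latticeBasis, Module.Basis.repr_isUnitSMul, Units.smul_def]

lemma box_eq_preimage (L : ℝ) : box d L = (WithLp.ofLp : Euc d → Fin d → ℝ) ⁻¹'
    (Set.pi Set.univ fun _ : Fin d => Set.Icc (0 : ℝ) L) := by
  ext x
  simp only [box, Set.mem_ofPred_eq, Set.mem_preimage, Set.mem_pi, Set.mem_univ, true_imp_iff]

/-- The half-open period cell `[0,𝓛)^d` of the lattice and the closed box differ by a null set. -/
lemma fundamentalDomain_ae_eq_box {L : ℝ} (hL : 0 < L) :
    (ZSpan.fundamentalDomain (latticeBasis d hL) : Set (Euc d)) =ᵐ[volume] box d L := by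
  have h : (Set.pi Set.univ fun _ : Fin d => Set.Ico (0 : ℝ) L) =ᵐ[volume]
      Set.pi Set.univ fun _ : Fin d => Set.Icc (0 : ℝ) L := Measure.pi_Ico_ae_eq_pi_Icc
  have h2 := (PiLp.volume_preserving_ofLp (Fin d)).quasiMeasurePreserving.preimage_ae_eq h
  have e1 : (ZSpan.fundamentalDomain (latticeBasis d hL) : Set (Euc d)) =
      WithLp.ofLp ⁻¹' (Set.pi Set.univ fun _ : Fin d => Set.Ico (0 : ℝ) L) := by
    ext x
    simp only [ZSpan.mem_fundamentalDomain, latticeBasis_repr, Set.mem_preimage, Set.mem_pi,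
      Set.mem_univ, true_imp_iff, Set.mem_Ico]
    refine forall_congr' fun i => and_congr ?_ ?_
    · rw [mul_nonneg_iff_of_pos_left (inv_pos.2 hL)]
    · rw [inv_mul_lt_iff₀ hL, mul_one]
  rw [e1, box_eq_preimage]
  exact h2

lemma volume_box_lt_top (L : ℝ) : volume (box d L) < ∞ := by
  rw [box_eq_preimage, (PiLp.volume_preserving_ofLp (Fin d)).measure_preimage
    (MeasurableSet.univ_pi fun _ => measurableSet_Icc).nullMeasurableSet]
  exact (isCompact_univ_pi fun _ => isCompact_Icc).measure_lt_top

/-- Periodicity in each coordinate is invariance under the whole period lattice, in the form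
required by `IsAddFundamentalDomain.setIntegral_eq`. -/
lemma PeriodicF.vadd_eq {E : Type*} {L : ℝ} (hL : 0 < L) {f : Euc d → E} (hf : PeriodicF L f)
    (g : Submodule.span ℤ (Set.range (latticeBasis d hL))) (x : Euc d) : f (g +ᵥ x) = f x := by
  obtain ⟨g, hg⟩ := g
  change f (g + x) = f x
  induction hg using Submodule.span_induction generalizing x with
  | mem y hy =>
    obtain ⟨i, rfl⟩ := hy
    rw [latticeBasis_apply, add_comm]
    exact hf x i
  | zero => simp
  | add y z _ _ hy hz => rw [add_assoc, hy, hz]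
  | smul n y _ hy =>
    induction n using Int.induction_on generalizing x with
    | zero => simp
    | succ n ih => rw [add_smul, one_smul, add_assoc, ih, hy]
    | pred n ih =>
      rw [sub_smul, one_smul, ← hy, ← add_assoc, add_sub_cancel, ih]

/-- The integral of a periodic function over a period box is invariant under translations. -/
lemma setIntegral_box_add {E : Type*} [NormedAddCommGroup E] [NormedSpace ℝ E] {L : ℝ}
    (hL : 0 < L) {f : Euc d → E} (hf : PeriodicF L f) (r : Euc d) :
    ∫ x in box d L, f (x + r) = ∫ x in box d L, f x := by
  have hae := fundamentalDomain_ae_eq_box (d := d) hL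
  have : VAddInvariantMeasure (Submodule.span ℤ (Set.range (latticeBasis d hL))) (Euc d) volume :=
    inferInstanceAs <| VAddInvariantMeasure
      (Submodule.span ℤ (Set.range (latticeBasis d hL))).toAddSubgroup (Euc d) volume
  have hD := ZSpan.isAddFundamentalDomain (latticeBasis d hL) (volume : Measure (Euc d))
  have hD' := hD.vadd_of_comm r
  rw [← setIntegral_congr_set hae, ← setIntegral_congr_set hae,
    hD.setIntegral_eq hD' (hf.vadd_eq hL)]
  have := (measurePreserving_add_right (volume : Measure (Euc d)) r).setIntegral_image_emb
    (measurableEmbedding_addRight r) f (ZSpan.fundamentalDomain (latticeBasis d hL))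
  rw [← this]
  congr 2
  exact Set.image_congr fun x _ => add_comm x r

/-! ### The coarse-graining kernel -/

variable {G : Euc d → ℝ} {ℓ : ℝ}

lemma IsMollifier.resc_nonneg (hG : IsMollifier G) (hℓ : 0 < ℓ) (r : Euc d) :
    0 ≤ resc G ℓ r :=
  mul_nonneg (by positivity) (hG.nonneg _)

lemma IsMollifier.integrable (hG : IsMollifier G) : Integrable G := by
  by_contra h
  have := hG.integral_one
  rw [integral_undef h] at this
  exact zero_ne_one this

lemma IsMollifier.integrable_resc (hG : IsMollifier G) (hℓ : 0 < ℓ) :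
    Integrable (resc G ℓ) :=
  (hG.integrable.comp_smul (inv_ne_zero hℓ.ne')).const_mul _

lemma IsMollifier.integral_resc (hG : IsMollifier G) (hℓ : 0 < ℓ) :
    ∫ r, resc G ℓ r = 1 := by
  simp only [resc]
  rw [integral_const_mul, Measure.integral_comp_inv_smul_of_nonneg _ _ hℓ.le, hG.integral_one]
  simp [hℓ.ne']

lemma IsMollifier.integrable_resc_smul {E : Type*} [NormedAddCommGroup E] [NormedSpace ℝ E]
    [MeasurableSpace E] [BorelSpace E] [SecondCountableTopology E]
    (hG : IsMollifier G) (hℓ : 0 < ℓ) {a : Euc d → E} (ha : Measurable a) {C : ℝ}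
    (hC : ∀ y, ‖a y‖ ≤ C) (x : Euc d) :
    Integrable fun r => resc G ℓ r • a (x + r) :=
  (hG.integrable_resc hℓ).smul_bdd C
    (ha.comp (measurable_const_add x)).aestronglyMeasurable (.of_forall fun _ => hC _)

/-! ### Coarse-graining preserves box integrals -/

/-- Joint integrability of the integrand of `∫_{[0,𝓛]^d} f̄_ℓ`, as needed for Fubini. -/
lemma IsMollifier.integrable_prod (hG : IsMollifier G) (hℓ : 0 < ℓ) (L : ℝ) {f : Euc d → ℝ}
    (hf : Measurable f) {C : ℝ} (hC : ∀ y, ‖f y‖ ≤ C) :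
    Integrable (fun z : Euc d × Euc d => resc G ℓ z.2 • f (z.1 + z.2))
      ((volume.restrict (box d L)).prod volume) := by
  have : IsFiniteMeasure (volume.restrict (box d L)) :=
    ⟨by simpa using volume_box_lt_top L⟩
  exact ((hG.integrable_resc hℓ).comp_snd _).smul_bdd C
    (hf.comp (measurable_fst.add measurable_snd)).aestronglyMeasurable (.of_forall fun _ => hC _)

lemma setIntegral_cg (hG : IsMollifier G) (hℓ : 0 < ℓ) {L : ℝ} (hL : 0 < L) {f : Euc d → ℝ}
    (hf : Measurable f) {C : ℝ} (hC : ∀ y, ‖f y‖ ≤ C) (hp : PeriodicF L f) :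
    ∫ x in box d L, cg G ℓ f x = ∫ x in box d L, f x := by
  have : IsFiniteMeasure (volume.restrict (box d L)) :=
    ⟨by simpa using volume_box_lt_top L⟩
  simp only [cg]
  rw [integral_integral_swap (hG.integrable_prod hℓ L hf hC)]
  simp_rw [integral_smul, setIntegral_box_add hL hp]
  rw [integral_smul_const, hG.integral_resc hℓ, one_smul]

/-! ### The pointwise inequality -/

/-- Jensen's inequality for the weights `r ↦ G_ℓ(r) ρ(x+r)`, in the form
`ρ̄ |ṽ|² ≤ (ρ |v|²)‾`. -/
lemma cg_mul_norm_favre_sq_le (hG : IsMollifier G) (hℓ : 0 < ℓ)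
    {ρ : Euc d → ℝ} {v : Euc d → Euc d}
    (hρm : Measurable ρ) (hρ0 : ∀ y, 0 ≤ ρ y) {R : ℝ} (hρb : ∀ y, ρ y ≤ R)
    (hvm : Measurable v) {Cv : ℝ} (hvb : ∀ y, ‖v y‖ ≤ Cv) (x : Euc d) :
    cg G ℓ ρ x * ‖favre G ℓ ρ v x‖ ^ 2 ≤ cg G ℓ (fun y => ρ y * ‖v y‖ ^ 2) x := by
  have hR : 0 ≤ R := (hρ0 0).trans (hρb 0)
  have hρn : ∀ y, ‖ρ y‖ ≤ R := fun y => by rw [Real.norm_of_nonneg (hρ0 y)]; exact hρb y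
  have h1 := hG.integrable_resc_smul hℓ hρm hρn x
  have h2 := hG.integrable_resc_smul hℓ (hρm.smul hvm) (C := R * Cv)
    (fun y => by
      rw [Pi.smul_apply', norm_smul]
      exact mul_le_mul (hρn y) (hvb y) (norm_nonneg _) hR) x
  have h3 := hG.integrable_resc_smul hℓ (hρm.mul (hvm.norm.pow_const 2)) (C := R * Cv ^ 2)
    (fun y => by
      simp only [Pi.mul_apply, norm_mul, norm_pow, norm_norm]
      gcongr
      exacts [hρn y, hvb y]) x
  simp only [Pi.smul_apply', Pi.mul_apply] at h2 h3
  by_cases hpos : 0 < cg G ℓ ρ x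
  · set u := favre G ℓ ρ v x with hu
    have hmom : cg G ℓ (fun y => ρ y • v y) x = cg G ℓ ρ x • u := by
      rw [hu, favre, if_pos hpos, smul_smul, mul_inv_cancel₀ hpos.ne', one_smul]
    have hexpand : ∫ r, (resc G ℓ r • (ρ (x + r) * ‖v (x + r)‖ ^ 2)
        - 2 * ⟪u, resc G ℓ r • (ρ (x + r) • v (x + r))⟫
        + (resc G ℓ r • ρ (x + r)) * ‖u‖ ^ 2)
        = cg G ℓ (fun y => ρ y * ‖v y‖ ^ 2) x
          - 2 * ⟪u, cg G ℓ (fun y => ρ y • v y) x⟫ + cg G ℓ ρ x * ‖u‖ ^ 2 := by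
      have h2' := (h2.const_inner (𝕜 := ℝ) u).const_mul 2
      have h32 : Integrable fun r => resc G ℓ r • (ρ (x + r) * ‖v (x + r)‖ ^ 2)
          - 2 * ⟪u, resc G ℓ r • (ρ (x + r) • v (x + r))⟫ := h3.sub h2'
      rw [integral_add h32 (h1.mul_const _), integral_sub h3 h2', integral_const_mul,
        integral_inner h2, integral_mul_const]
      rfl
    have hnn : 0 ≤ ∫ r, (resc G ℓ r • (ρ (x + r) * ‖v (x + r)‖ ^ 2)
        - 2 * ⟪u, resc G ℓ r • (ρ (x + r) • v (x + r))⟫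
        + (resc G ℓ r • ρ (x + r)) * ‖u‖ ^ 2) := by
      refine integral_nonneg fun r => ?_
      have hsq : ‖u - v (x + r)‖ ^ 2 = ‖u‖ ^ 2 - 2 * ⟪u, v (x + r)⟫ + ‖v (x + r)‖ ^ 2 :=
        norm_sub_sq_real _ _
      have := mul_nonneg (mul_nonneg (hG.resc_nonneg hℓ r) (hρ0 (x + r)))
        (sq_nonneg ‖u - v (x + r)‖)
      rw [hsq] at this
      simp only [Pi.zero_apply, inner_smul_right, smul_eq_mul]
      linarith
    rw [hexpand, hmom, inner_smul_right, real_inner_self_eq_norm_sq] at hnn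
    linarith
  · rw [favre, if_neg hpos]
    simp only [norm_zero, ne_eq, OfNat.ofNat_ne_zero, not_false_eq_true, zero_pow, mul_zero]
    exact integral_nonneg fun r =>
      mul_nonneg (hG.resc_nonneg hℓ r) (mul_nonneg (hρ0 _) (sq_nonneg _))

end QT

open QT in
/-- the large-scale kinetic energy is bounded by the total kinetic energy,
`∫_{[0,𝓛]^d} ½ ρ̄_ℓ |ṽ_ℓ|² ≤ ∫_{[0,𝓛]^d} ½ ρ |v|²`. -/
theorem largeScale_kineticEnergy_le {d : ℕ} (hd : 1 ≤ d)
    (G : Euc d → ℝ) (hG : IsMollifier G) (𝓛 : ℝ) (h𝓛 : 0 < 𝓛)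
    (ρ : Euc d → ℝ) (v : Euc d → Euc d)
    (hρm : Measurable ρ) (hρ0 : ∀ y, 0 ≤ ρ y) (R : ℝ) (hρb : ∀ y, ρ y ≤ R)
    (hvm : Measurable v) (Cv : ℝ) (hvb : ∀ y, ‖v y‖ ≤ Cv)
    (hρp : PeriodicF 𝓛 ρ) (hvp : PeriodicF 𝓛 v) (ℓ : ℝ) (hℓ : 0 < ℓ) :
    (∫ x in box d 𝓛, (1 / 2 : ℝ) * cg G ℓ ρ x * ‖favre G ℓ ρ v x‖ ^ 2) ≤
      ∫ x in box d 𝓛, (1 / 2 : ℝ) * ρ x * ‖v x‖ ^ 2 := by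
  have hR : 0 ≤ R := (hρ0 0).trans (hρb 0)
  have hfm : Measurable fun y => ρ y * ‖v y‖ ^ 2 := hρm.mul (hvm.norm.pow_const 2)
  have hfb : ∀ y, ‖ρ y * ‖v y‖ ^ 2‖ ≤ R * Cv ^ 2 := fun y => by
    rw [norm_mul, Real.norm_of_nonneg (hρ0 y), norm_pow, norm_norm]
    gcongr
    exacts [hρb y, hvb y]
  have hfp : PeriodicF 𝓛 fun y => ρ y * ‖v y‖ ^ 2 := fun x i => by
    simp only [hρp x i, hvp x i]
  have hfi : IntegrableOn (cg G ℓ fun y => ρ y * ‖v y‖ ^ 2) (box d 𝓛) :=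
    (hG.integrable_prod hℓ 𝓛 hfm hfb).integral_prod_left
  simp_rw [mul_assoc, integral_const_mul]
  refine mul_le_mul_of_nonneg_left ?_ (by norm_num)
  rw [← setIntegral_cg hG hℓ h𝓛 hfm hfb hfp]
  -- Measurability of the left-hand integrand is not needed: it is nonnegative and dominated.
  refine integral_mono_of_nonneg (.of_forall fun x => ?_) hfi (.of_forall fun x =>
    cg_mul_norm_favre_sq_le hG hℓ hρm hρ0 hρb hvm hvb x)
  exact mul_nonneg (integral_nonneg fun r => mul_nonneg (hG.resc_nonneg hℓ r) (hρ0 _))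
    (sq_nonneg _)
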